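/- Let S be a finite set of size s ≥ 1 and C a nonempty subset of S. Then the sum of μ(ρ, {S}) over all set partitions ρ of S that contain C as a block equals (-1)^(s - |C|). -/

import Mathlib

open scoped BigOperators

/-!
Write `w k = (-1)^k k!`. Deleting the block `C` turns the partitions of `S` containing `C` into all
partitions of `S \ C`, so the sum equals `f (S \ C)`, where `f T` is the sum of `w` of the number of
blocks over all partitions of `T`. It remains to show `f T = (-1)^|T|`.

Since `w k = -k w (k - 1)` for `k > 0`, for nonempty `T` the sum `f T` runs, up to sign, over
partitions of `T` with a distinguished block. Deleting that block gives `f T = -∑ f A` over the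
proper subsets `A` of `T`, and `(-1)^|T|` satisfies the same recursion.
-/

section DeletePart

theorem notMem_parts_of_disjoint {α : Type*} [Lattice α] [OrderBot α] {a b : α}
    (hb : b ≠ ⊥) (hab : Disjoint a b) (σ : Finpartition a) : b ∉ σ.parts :=
  fun h ↦ hb <| hab.symm.eq_bot_of_le <| σ.le h

variable {α : Type*} [DistribLattice α] [OrderBot α] [DecidableEq α] {a b c : α}

theorem sup_parts_erase_eq_of_disjoint (hab : Disjoint a b) (hc : a ⊔ b = c) (ρ : Finpartition c)
    (hρ : b ∈ ρ.parts) : (ρ.parts.erase b).sup id = a := by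
  have hdisj : Disjoint ((ρ.parts.erase b).sup id) b :=
    (Finset.supIndep_iff_disjoint_erase.1 ρ.supIndep b hρ).symm
  have hsup : (ρ.parts.erase b).sup id ⊔ b = c := by
    simpa only [Finset.insert_erase hρ, ρ.sup_parts, id, sup_comm] using
      (Finset.sup_insert (f := id) (s := ρ.parts.erase b) (b := b)).symm
  exact eq_of_inf_eq_sup_eq (hdisj.eq_bot.trans hab.eq_bot.symm) (hsup.trans hc.symm)

/-- Adding the part `b` to a partition of `a` is a bijection onto the partitions of `a ⊔ b` having
`b` as a part; the inverse deletes `b`. The join is a variable `c` so that, for finsets, one may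
take `a = T \ b` and `c = T`. -/
def finpartitionExtendEquiv (hb : b ≠ ⊥) (hab : Disjoint a b) (hc : a ⊔ b = c) :
    Finpartition a ≃ {ρ : Finpartition c // b ∈ ρ.parts} where
  toFun σ := ⟨σ.extend hb hab hc, Finset.mem_insert_self b σ.parts⟩
  invFun ρ := ρ.1.ofSubset (Finset.erase_subset b _)
    (sup_parts_erase_eq_of_disjoint hab hc ρ.1 ρ.2)
  left_inv σ := Finpartition.ext (Finset.erase_insert (notMem_parts_of_disjoint hb hab σ))
  right_inv ρ := Subtype.ext (Finpartition.ext (Finset.insert_erase ρ.2))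

theorem card_parts_finpartitionExtendEquiv (hb : b ≠ ⊥) (hab : Disjoint a b) (hc : a ⊔ b = c)
    (σ : Finpartition a) :
    (finpartitionExtendEquiv hb hab hc σ).1.parts.card = σ.parts.card + 1 :=
  σ.card_extend b c (hb := hb) (hab := hab) (hc := hc)

end DeletePart

section SumFinpartition

open Finset Nat

variable {S M : Type*} [DecidableEq S] [AddCommMonoid M]

theorem sum_finpartition_mem_parts {T B : Finset S} (hB : B.Nonempty) (hBT : B ⊆ T) (g : ℕ → M) :
    ∑ ρ : Finpartition T with B ∈ ρ.parts, g #ρ.parts =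
      ∑ σ : Finpartition (T \ B), g (#σ.parts + 1) := by
  let e : Finpartition (T \ B) ≃ {ρ : Finpartition T // B ∈ ρ.parts} :=
    finpartitionExtendEquiv hB.ne_empty sdiff_disjoint (sdiff_union_of_subset hBT)
  rw [sum_subtype (p := fun ρ : Finpartition T ↦ B ∈ ρ.parts) _ (by simp), ← e.sum_comp]
  simp only [e, card_parts_finpartitionExtendEquiv]

theorem sum_nonempty_subsets_sdiff (T : Finset S) (f : Finset S → M) :
    ∑ B ∈ T.powerset.erase ∅, f (T \ B) = ∑ A ∈ T.ssubsets, f A := by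
  refine sum_nbij' (T \ ·) (T \ ·) ?_ ?_ ?_ ?_ fun _ _ ↦ rfl
  · intro B hB
    obtain ⟨hne, hBT⟩ := mem_erase.1 hB
    exact mem_ssubsets.2 (sdiff_ssubset (mem_powerset.1 hBT) (nonempty_iff_ne_empty.2 hne))
  · intro A hA
    exact mem_erase.2 ⟨(sdiff_nonempty.2 (mem_ssubsets.1 hA).2).ne_empty,
      mem_powerset.2 sdiff_subset⟩
  · intro B hB
    exact Finset.sdiff_sdiff_eq_self (mem_powerset.1 (mem_of_mem_erase hB))
  · intro A hA
    exact Finset.sdiff_sdiff_eq_self (mem_ssubsets.1 hA).1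

theorem sum_finpartition_card_nsmul (T : Finset S) (g : ℕ → M) :
    ∑ ρ : Finpartition T, #ρ.parts • g #ρ.parts =
      ∑ A ∈ T.ssubsets, ∑ σ : Finpartition A, g (#σ.parts + 1) := by
  calc
    _ = ∑ ρ : Finpartition T, ∑ _B ∈ ρ.parts, g #ρ.parts := by simp only [sum_const]
    _ = ∑ B ∈ T.powerset.erase ∅, ∑ ρ : Finpartition T with B ∈ ρ.parts, g #ρ.parts := by
      refine sum_comm' fun ρ B ↦ ?_
      simp only [mem_univ, true_and, mem_filter, mem_erase, mem_powerset]
      exact ⟨fun h ↦ ⟨h, ρ.ne_empty h, ρ.subset h⟩, And.left⟩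
    _ = ∑ B ∈ T.powerset.erase ∅, ∑ σ : Finpartition (T \ B), g (#σ.parts + 1) := by
      refine sum_congr rfl fun B hB ↦ ?_
      obtain ⟨hne, hBT⟩ := mem_erase.1 hB
      exact sum_finpartition_mem_parts (nonempty_iff_ne_empty.2 hne) (mem_powerset.1 hBT) g
    _ = _ := sum_nonempty_subsets_sdiff T fun A ↦ ∑ σ : Finpartition A, g (#σ.parts + 1)

theorem sum_ssubsets_neg_one_pow_card {T : Finset S} (hT : T.Nonempty) :
    ∑ A ∈ T.ssubsets, (-1 : ℤ) ^ #A = -(-1) ^ #T := by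
  rw [ssubsets, sum_erase_eq_sub (mem_powerset_self T),
    sum_powerset_neg_one_pow_card_of_nonempty hT, zero_sub]

theorem neg_one_pow_mul_factorial_eq_nsmul {k : ℕ} (hk : k ≠ 0) :
    (-1 : ℤ) ^ k * k ! = k • -((-1) ^ (k - 1) * (k - 1)! : ℤ) := by
  obtain ⟨k, rfl⟩ := exists_eq_succ_of_ne_zero hk
  simp only [succ_eq_add_one, add_tsub_cancel_right, factorial_succ, nsmul_eq_mul, pow_succ]
  push_cast
  ring

theorem sum_finpartition_neg_one_pow_mul_factorial_eq_neg {T : Finset S} (hT : T.Nonempty) :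
    ∑ ρ : Finpartition T, (-1 : ℤ) ^ #ρ.parts * (#ρ.parts)! =
      -∑ A ∈ T.ssubsets, ∑ σ : Finpartition A, (-1 : ℤ) ^ #σ.parts * (#σ.parts)! := by
  have hparts (ρ : Finpartition T) : #ρ.parts ≠ 0 := (ρ.parts_nonempty hT.ne_empty).card_ne_zero
  simp only [fun ρ ↦ neg_one_pow_mul_factorial_eq_nsmul (hparts ρ)]
  rw [sum_finpartition_card_nsmul T fun k ↦ -((-1 : ℤ) ^ (k - 1) * (k - 1)!)]
  simp only [add_tsub_cancel_right, sum_neg_distrib]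

theorem sum_finpartition_neg_one_pow_mul_factorial (T : Finset S) :
    ∑ ρ : Finpartition T, (-1 : ℤ) ^ #ρ.parts * (#ρ.parts)! = (-1) ^ #T := by
  induction T using Finset.strongInduction with
  | H T ih =>
    rcases T.eq_empty_or_nonempty with rfl | hT
    · have : Unique (Finpartition (∅ : Finset S)) :=
        inferInstanceAs (Unique (Finpartition (⊥ : Finset S)))
      have hparts (ρ : Finpartition (∅ : Finset S)) : ρ.parts = ∅ := ρ.parts_eq_empty_iff.2 rfl
      simp [hparts]
    · rw [sum_finpartition_neg_one_pow_mul_factorial_eq_neg hT,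
        sum_congr rfl fun A hA ↦ ih A (mem_ssubsets.1 hA),
        sum_ssubsets_neg_one_pow_card hT, neg_neg]

end SumFinpartition

/-- For a finite set `S` of size `s ≥ 1` and a nonempty subset `C ⊆ S`, the sum
of `μ(ρ, {S}) = (-1)^(#(ρ)-1)·(#(ρ)-1)!` over all set partitions `ρ` of `S`
having `C` as a block equals `(-1)^(s - |C|)`. -/
theorem stmt_3 {S : Type*} [Fintype S] [DecidableEq S]
    (C : Finset S) (hC : C.Nonempty) :
    (∑ᶠ (ρ : Finpartition (Finset.univ : Finset S)) (_ : C ∈ ρ.parts),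
        ((-1 : ℤ) ^ (ρ.parts.card - 1) * (ρ.parts.card - 1).factorial)) =
      (-1) ^ (Fintype.card S - C.card) := by
  let w (k : ℕ) : ℤ := (-1) ^ k * k.factorial
  calc
    _ = ∑ ρ : Finpartition Finset.univ with C ∈ ρ.parts, w (ρ.parts.card - 1) :=
      finsum_cond_eq_sum_of_cond_iff _ (by simp)
    _ = ∑ σ : Finpartition (Finset.univ \ C), w σ.parts.card :=
      sum_finpartition_mem_parts hC C.subset_univ fun k ↦ w (k - 1)
    _ = (-1) ^ (Finset.univ \ C).card := sum_finpartition_neg_one_pow_mul_factorial _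
    _ = (-1) ^ (Fintype.card S - C.card) := by
      rw [Finset.card_sdiff_of_subset C.subset_univ, Finset.card_univ]
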